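/- Let G be a bipartite graph, let 0 < λ < 1 with βλ/6 a positive integer, let H be an unweighted edge-degree-constrained subgraph EDCS(G, β, β(1−λ)), and let G' be obtained from G by inserting a single new edge e. Then there exists an unweighted EDCS(G', β, β(1−λ)) H' such that the symmetric difference of H and H' contains at most 24/λ + 2 edges. -/

import Mathlib

/-- The degree of `v` in the simple graph `H`. -/
noncomputable def sdeg {V : Type*} (H : SimpleGraph V) (v : V) : ℕ :=
  (H.neighborSet v).ncard

open SimpleGraph

/-- `H` is a subgraph of `K` satisfying the two edge-degree constraints, with upper bound `B` and
lower bound `c`, for the vertex labels `D` in place of the degrees of `H`. -/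
def IsLabelledEDCS {V : Type*} (K H : SimpleGraph V) (B c : ℤ) (D : V → ℤ) : Prop :=
  H ≤ K ∧ (∀ u v, H.Adj u v → D u + D v ≤ B) ∧
    ∀ u v, K.Adj u v → ¬ H.Adj u v → c ≤ D u + D v

namespace IsLabelledEDCS

variable {V : Type*} {K H : SimpleGraph V} {B c : ℤ} {D : V → ℤ}

theorem sup_edge (h : IsLabelledEDCS K H B c D) {x y : V} (hK : K.Adj x y)
    (hB : D x + D y ≤ B) : IsLabelledEDCS K (H ⊔ edge x y) B c D := by
  obtain ⟨hle, h1, h2⟩ := h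
  refine ⟨sup_le hle ((edge_le_iff K).2 (Or.inr hK)), fun u v huv => ?_, fun u v huv hn => ?_⟩
  · rw [sup_adj, edge_adj] at huv
    rcases huv with huv | ⟨⟨rfl, rfl⟩ | ⟨rfl, rfl⟩, -⟩
    · exact h1 u v huv
    · exact hB
    · rwa [add_comm]
  · exact h2 u v huv fun hH => hn (Or.inl hH)

theorem sdiff_edge (h : IsLabelledEDCS K H B c D) {x y : V} (hc : c ≤ D x + D y) :
    IsLabelledEDCS K (H \ edge x y) B c D := by
  obtain ⟨hle, h1, h2⟩ := h
  refine ⟨sdiff_le.trans hle, fun u v huv => h1 u v huv.1, fun u v huv hn => ?_⟩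
  by_cases hH : H.Adj u v
  · have he : (edge x y).Adj u v := by
      by_contra he
      exact hn ⟨hH, he⟩
    rw [edge_adj] at he
    rcases he with ⟨⟨rfl, rfl⟩ | ⟨rfl, rfl⟩, -⟩
    · exact hc
    · rwa [add_comm]
  · exact h2 u v huv hH

end IsLabelledEDCS

section Degree

variable {V : Type*} [Finite V] [DecidableEq V]

theorem sdeg_sup_edge (H : SimpleGraph V) {x y : V} (hxy : x ≠ y) (hn : ¬ H.Adj x y) (u : V) :
    (sdeg (H ⊔ edge x y) u : ℤ) =
      sdeg H u + (if u = x then 1 else 0) + if u = y then 1 else 0 := by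
  unfold sdeg
  have hn' : ¬ H.Adj y x := fun h => hn h.symm
  by_cases hx : u = x
  · subst hx
    have : (H ⊔ edge u y).neighborSet u = insert y (H.neighborSet u) := by
      ext z
      simp only [mem_neighborSet, sup_adj, edge_adj, Set.mem_insert_iff]
      grind
    rw [this, Set.ncard_insert_of_notMem (by simpa using hn)]
    simp [hxy]
  by_cases hy : u = y
  · subst hy
    have : (H ⊔ edge x u).neighborSet u = insert x (H.neighborSet u) := by
      ext z
      simp only [mem_neighborSet, sup_adj, edge_adj, Set.mem_insert_iff]
      grind
    rw [this, Set.ncard_insert_of_notMem (by simpa using hn')]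
    simp [hx]
  have : (H ⊔ edge x y).neighborSet u = H.neighborSet u := by
    ext z
    simp only [mem_neighborSet, sup_adj, edge_adj]
    grind
  simp [this, hx, hy]

theorem sdeg_eq_sdeg_sdiff_edge (H : SimpleGraph V) {x y : V} (h : H.Adj x y) (u : V) :
    (sdeg H u : ℤ) =
      sdeg (H \ edge x y) u + (if u = x then 1 else 0) + if u = y then 1 else 0 := by
  rw [← sdeg_sup_edge (H \ edge x y) h.ne (by simp [edge_adj, h.ne]) u,
    sdiff_sup_cancel ((edge_le_iff H).2 (Or.inr h))]

end Degree

section EdgeDistance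

variable {V : Type*} [Finite V]

theorem ncard_symmDiff_edgeSet_triangle (H₁ H₂ H₃ : SimpleGraph V) :
    (symmDiff H₁.edgeSet H₃.edgeSet).ncard ≤
      (symmDiff H₁.edgeSet H₂.edgeSet).ncard + (symmDiff H₂.edgeSet H₃.edgeSet).ncard :=
  (Set.ncard_le_ncard (symmDiff_triangle _ _ _) (Set.toFinite _)).trans (Set.ncard_union_le _ _)

theorem ncard_symmDiff_edgeSet_sup_edge (H : SimpleGraph V) (x y : V) :
    (symmDiff H.edgeSet (H ⊔ edge x y).edgeSet).ncard ≤ 1 := by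
  rw [← Set.ncard_singleton s(x, y)]
  refine Set.ncard_le_ncard (fun e he => ?_) (Set.toFinite _)
  rw [edgeSet_sup, Set.mem_symmDiff] at he
  have : (edge x y).edgeSet ⊆ {s(x, y)} := by simp [edgeSet_edge]
  grind

theorem ncard_symmDiff_edgeSet_sdiff_edge (H : SimpleGraph V) (x y : V) :
    (symmDiff H.edgeSet (H \ edge x y).edgeSet).ncard ≤ 1 := by
  rw [← Set.ncard_singleton s(x, y)]
  refine Set.ncard_le_ncard (fun e he => ?_) (Set.toFinite _)
  rw [edgeSet_sdiff, Set.mem_symmDiff] at he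
  have : (edge x y).edgeSet ⊆ {s(x, y)} := by simp [edgeSet_edge]
  grind

end EdgeDistance

/-- If the labels `D` agree with the degrees of `H` shifted by `w`, except for one vertex `v` of
excess degree one, then an alternating path from `v` repairs `H`. Every two edges of the path
lower the label of its endpoint by `B - c`, which bounds its length. -/
theorem IsLabelledEDCS.exists_repair {V : Type*} [Finite V] [DecidableEq V] {K : SimpleGraph V}
    {B c : ℤ} (hcB : c ≤ B) {D w : V → ℤ} (hw : ∀ u, w u ≤ 1) (n : ℕ) :
    ∀ (H : SimpleGraph V) (v : V), IsLabelledEDCS K H B c D →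
      (∀ u, (sdeg H u : ℤ) = D u + w u + if u = v then 1 else 0) →
      D v + 2 < (B - c) * n →
      ∃ H', IsLabelledEDCS K H' B c (fun u => sdeg H' u - w u) ∧
        (symmDiff H.edgeSet H'.edgeSet).ncard ≤ 2 * n := by
  induction n with
  | zero =>
    intro H v _ hD hv
    have h1 := hD v
    have h2 := hw v
    simp only [if_true, Nat.cast_zero, mul_zero] at h1 hv
    omega
  | succ n ih =>
    intro H v hH hD hv
    by_cases hP1 : ∀ x, H.Adj v x → D v + D x + 1 ≤ B
    · refine ⟨H, ⟨hH.1, fun p q hpq => ?_, fun p q hpq hn => ?_⟩, by simp⟩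
      · have h1 := hH.2.1 p q hpq
        have h2 := hpq.ne
        have h3 := hD p
        have h4 := hD q
        by_cases hp : p = v
        · subst hp
          have := hP1 q hpq
          grind
        · by_cases hq : q = v
          · subst hq
            have := hP1 p hpq.symm
            grind
          · grind
      · have h1 := hH.2.2 p q hpq hn
        have h3 := hD p
        have h4 := hD q
        grind
    push Not at hP1
    obtain ⟨x, hvx, hlt⟩ := hP1
    have hB := hH.2.1 v x hvx
    have hH1 := hH.sdiff_edge (x := v) (y := x) (by omega)
    have hD1 : ∀ u, (sdeg (H \ edge v x) u : ℤ) = D u + w u - if u = x then 1 else 0 := by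
      intro u
      have h1 := hD u
      have h2 := sdeg_eq_sdeg_sdiff_edge H hvx u
      omega
    have hd1 := ncard_symmDiff_edgeSet_sdiff_edge H v x
    by_cases hP2 : ∀ y, K.Adj x y → ¬ (H \ edge v x).Adj x y → c ≤ D x + D y - 1
    · refine ⟨H \ edge v x, ⟨hH1.1, fun p q hpq => ?_, fun p q hpq hn => ?_⟩, by omega⟩
      · have h1 := hH1.2.1 p q hpq
        have h3 := hD1 p
        have h4 := hD1 q
        grind
      · have h1 := hH1.2.2 p q hpq hn
        have h2 := hpq.ne
        have h3 := hD1 p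
        have h4 := hD1 q
        by_cases hp : p = x
        · subst hp
          have := hP2 q hpq hn
          grind
        · by_cases hq : q = x
          · subst hq
            have := hP2 p hpq.symm fun h => hn h.symm
            grind
          · grind
    push Not at hP2
    obtain ⟨y, hxy, hn, hlt2⟩ := hP2
    have hc := hH1.2.2 x y hxy hn
    have hH2 := hH1.sup_edge hxy (by omega)
    obtain ⟨H', hH', hd'⟩ := ih _ y hH2
      (fun u => by
        have h1 := hD1 u
        have h2 := sdeg_sup_edge (H \ edge v x) hxy.ne hn u
        omega)
      (by push_cast at hv; linarith)
    refine ⟨H', hH', ?_⟩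
    have hd2 := ncard_symmDiff_edgeSet_sup_edge (H \ edge v x) x y
    have ht1 := ncard_symmDiff_edgeSet_triangle H (H \ edge v x) H'
    have ht2 := ncard_symmDiff_edgeSet_triangle (H \ edge v x) (H \ edge v x ⊔ edge x y) H'
    omega

/-- A bound on the label of a vertex in a labelled EDCS whose labels are, up to a shift, the
degrees of the graph. -/
theorem IsLabelledEDCS.label_le {V : Type*} {K H : SimpleGraph V} {B c : ℤ}
    (hB : 0 ≤ B) {w : V → ℤ} (h : IsLabelledEDCS K H B c fun u => sdeg H u - w u) {v : V}
    (hv : 0 ≤ w v) (hw : ∀ u, u ≠ v → w u = 0) : (sdeg H v : ℤ) - w v ≤ B := by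
  by_cases hx : ∃ x, H.Adj v x
  · obtain ⟨x, hx⟩ := hx
    have h1 := h.2.1 v x hx
    have h2 := hw x hx.ne'
    simp only [h2] at h1
    omega
  · have : H.neighborSet v = ∅ := by
      ext z
      simpa using fun hz => hx ⟨z, hz⟩
    simp only [sdeg, this, Set.ncard_empty]
    omega

/-- Let `H` be an unweighted EDCS(G, β, β(1−λ)) of a bipartite graph
`G`, with `0 < λ < 1` and `βλ/6` a positive integer, and let `G'` be obtained from `G` by
inserting a new edge `{a, b}`.  Then there is an unweighted EDCS(G', β, β(1−λ)) `H'` whose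
symmetric difference with `H` has at most `24/λ + 2` edges. -/
theorem stmt15 {V : Type*} [Fintype V] (G H : SimpleGraph V)
    (hHG : H ≤ G) (β : ℕ) (lam : ℝ) (hlam0 : 0 < lam) (hlam1 : lam < 1)
    (ℓ : ℕ) (hℓpos : 0 < ℓ) (hℓ : (ℓ : ℝ) = β * lam / 6)
    (hP1 : ∀ u v : V, H.Adj u v → sdeg H u + sdeg H v ≤ β)
    (hP2 : ∀ u v : V, G.Adj u v → ¬ H.Adj u v →
      (β : ℝ) * (1 - lam) ≤ (sdeg H u + sdeg H v : ℝ))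
    (a b : V) (hab : a ≠ b) (hnadj : ¬ G.Adj a b)
    (hbip' : (G ⊔ SimpleGraph.fromEdgeSet {s(a, b)}).Colorable 2) :
    ∃ H' : SimpleGraph V, H' ≤ G ⊔ SimpleGraph.fromEdgeSet {s(a, b)} ∧
      (∀ u v : V, H'.Adj u v → sdeg H' u + sdeg H' v ≤ β) ∧
      (∀ u v : V, (G ⊔ SimpleGraph.fromEdgeSet {s(a, b)}).Adj u v → ¬ H'.Adj u v →
        (β : ℝ) * (1 - lam) ≤ (sdeg H' u + sdeg H' v : ℝ)) ∧
      ((symmDiff H.edgeSet H'.edgeSet).ncard : ℝ) ≤ 24 / lam + 2 := by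
  classical
  have hc : (β : ℝ) * (1 - lam) = ((β - 6 * ℓ : ℤ) : ℝ) := by
    push_cast
    rw [hℓ]
    ring
  set K : SimpleGraph V := G ⊔ edge a b with hK
  change ∃ H' : SimpleGraph V, H' ≤ K ∧ _ ∧ (∀ u v : V, K.Adj u v → _) ∧ _
  suffices hmain : ∃ H', IsLabelledEDCS K H' β (β - 6 * ℓ) (fun u => (sdeg H' u : ℤ) - 0) ∧
      ((symmDiff H.edgeSet H'.edgeSet).ncard : ℝ) ≤ 24 / lam + 2 by
    obtain ⟨H', ⟨hle, h1, h2⟩, hd⟩ := hmain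
    refine ⟨H', hle, fun u v huv => ?_, fun u v huv hn => ?_, hd⟩
    · have := h1 u v huv
      dsimp only at this
      omega
    · rw [hc]
      have := h2 u v huv hn
      simp only [sub_zero] at this
      exact_mod_cast this
  have hG : IsLabelledEDCS G H β (β - 6 * ℓ) (fun u => (sdeg H u : ℤ) - 0) := by
    refine ⟨hHG, fun u v huv => ?_, fun u v huv hn => ?_⟩
    · have := hP1 u v huv
      dsimp only
      omega
    · have := hP2 u v huv hn
      rw [hc] at this
      simp only [sub_zero]
      exact_mod_cast this
  have hHab : ¬ H.Adj a b := fun h => hnadj (hHG h)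
  by_cases hge : (β - 6 * ℓ : ℤ) ≤ (sdeg H a : ℤ) + sdeg H b
  · refine ⟨H, ⟨hHG.trans le_sup_left, hG.2.1, fun u v huv hn => ?_⟩, by simp; positivity⟩
    rw [hK, sup_adj, edge_adj] at huv
    rcases huv with huv | ⟨⟨rfl, rfl⟩ | ⟨rfl, rfl⟩, -⟩
    · exact hG.2.2 u v huv hn
    · dsimp only; omega
    · dsimp only; omega
  have hS : IsLabelledEDCS K (H ⊔ edge a b) β (β - 6 * ℓ) (fun u => (sdeg H u : ℤ) - 0) := by
    refine ⟨sup_le_sup_right hHG _, fun u v huv => ?_, fun u v huv hn => ?_⟩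
    · rw [sup_adj, edge_adj] at huv
      rcases huv with huv | ⟨⟨rfl, rfl⟩ | ⟨rfl, rfl⟩, -⟩
      · exact hG.2.1 u v huv
      · dsimp only; omega
      · dsimp only; omega
    · rw [sup_adj, not_or] at hn
      exact hG.2.2 u v (huv.resolve_right hn.2) hn.1
  set n : ℕ := (β + 2) / (6 * ℓ) + 1 with hn
  have hnlt : (β : ℤ) + 2 < (β - (β - 6 * ℓ)) * n := by
    have h := Nat.lt_mul_div_succ (β + 2) (show 0 < 6 * ℓ by omega)
    rw [sub_sub_cancel]
    exact_mod_cast h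
  have hda := hG.label_le (w := fun _ => 0) (v := a) (by positivity) le_rfl (fun _ _ => rfl)
  obtain ⟨H₁, hH₁, hd₁⟩ := hS.exists_repair (by omega) (w := fun u => if u = b then 1 else 0)
    (by intro u; split_ifs <;> norm_num) n _ a
    (fun u => by have := sdeg_sup_edge H hab hHab u; omega) (by linarith)
  have hdb := hH₁.label_le (v := b) (by positivity) (by simp) (fun u hu => by simp [hu])
  obtain ⟨H₂, hH₂, hd₂⟩ := hH₁.exists_repair (by omega) (w := fun _ => 0) (by simp) n _ b
    (fun u => by omega) (by linarith)
  refine ⟨H₂, hH₂, ?_⟩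
  have hd₀ := ncard_symmDiff_edgeSet_sup_edge H a b
  have ht₁ := ncard_symmDiff_edgeSet_triangle H (H ⊔ edge a b) H₂
  have ht₂ := ncard_symmDiff_edgeSet_triangle (H ⊔ edge a b) H₁ H₂
  have htot : (symmDiff H.edgeSet H₂.edgeSet).ncard ≤ 4 * n + 1 := by omega
  have hℓ1 : (1 : ℝ) ≤ ℓ := by exact_mod_cast hℓpos
  have hnle : (n : ℝ) ≤ 1 / lam + 2 := by
    have h1 : (((β + 2) / (6 * ℓ) : ℕ) : ℝ) ≤ ((β + 2 : ℕ) : ℝ) / ((6 * ℓ : ℕ) : ℝ) :=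
      Nat.cast_div_le
    have h2 : ((β + 2 : ℕ) : ℝ) / ((6 * ℓ : ℕ) : ℝ) ≤ 1 / lam + 1 := by
      push_cast
      rw [div_le_iff₀ (by positivity)]
      have h3 : 1 / lam * (6 * ℓ) = β := by
        rw [hℓ]
        field_simp
      linarith
    rw [hn]
    push_cast at h1 h2 ⊢
    linarith
  have hinv : 1 < 1 / lam := by
    rw [lt_div_iff₀ hlam0]
    linarith
  have h24 : 24 / lam = 24 * (1 / lam) := by ring
  have htot' : ((symmDiff H.edgeSet H₂.edgeSet).ncard : ℝ) ≤ 4 * n + 1 := by exact_mod_cast htot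
  linarith
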